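/- Any two projection games G and H satisfy ‖G ⊗ H‖ ≤ λ₊(G) · ‖H‖, where ‖·‖ denotes the collision value. -/

import Mathlib

open Finset

/-- A projection game: finite nonempty question sets `Q1` (Alice) and `Q2` (Bob),
a finite nonempty alphabet `A`, and a probability mass function `μ` on triples
`(u, v, π)` where `π : A → Option A` encodes a projection constraint
(the answer pair `(α, β)` satisfies `π` iff `π β = some α`). -/
structure ProjGame where
  Q1 : Type
  Q2 : Type
  A : Type
  [fQ1 : Fintype Q1]
  [fQ2 : Fintype Q2]
  [fA : Fintype A]
  [neQ1 : Nonempty Q1]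
  [neQ2 : Nonempty Q2]
  [neA : Nonempty A]
  [dQ1 : DecidableEq Q1]
  [dQ2 : DecidableEq Q2]
  [dA : DecidableEq A]
  μ : Q1 × Q2 × (A → Option A) → ℝ
  μ_nonneg : ∀ x, 0 ≤ μ x
  μ_sum : ∑ x, μ x = 1

attribute [instance] ProjGame.fQ1 ProjGame.fQ2 ProjGame.fA
  ProjGame.neQ1 ProjGame.neQ2 ProjGame.neA ProjGame.dQ1 ProjGame.dQ2 ProjGame.dA

namespace ProjGame

variable (G : ProjGame)

/-- The `U`-marginal (Alice-side marginal) of `μ`. -/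
noncomputable def wU (u : G.Q1) : ℝ := ∑ v, ∑ π, G.μ (u, v, π)

/-- The `V`-marginal (Bob-side marginal) of `μ`. -/
noncomputable def wV (v : G.Q2) : ℝ := ∑ u, ∑ π, G.μ (u, v, π)

/-- The game operator: `(Gf)(u,α) = E_{(v,π)|u} [∑_{β : π β = some α} f (v,β)]`. -/
noncomputable def op (f : G.Q2 × G.A → ℝ) : G.Q1 × G.A → ℝ :=
  fun p =>
    (∑ v, ∑ π, G.μ (p.1, v, π) * ∑ β, if π β = some p.2 then f (v, β) else 0) / G.wU p.1

/-- Squared norm on functions on `U × Σ`: `‖g‖² = E_u [∑_α g(u,α)²]`. -/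
noncomputable def normUsq (g : G.Q1 × G.A → ℝ) : ℝ := ∑ u, G.wU u * ∑ α, (g (u, α)) ^ 2

/-- Squared norm on functions on `V × Σ`: `‖f‖² = E_v [∑_β f(v,β)²]`. -/
noncomputable def normVsq (f : G.Q2 × G.A → ℝ) : ℝ := ∑ v, G.wV v * ∑ β, (f (v, β)) ^ 2

/-- Inner product `⟨g, g'⟩ = E_u [∑_α g(u,α) g'(u,α)]`. -/
noncomputable def inn (g g' : G.Q1 × G.A → ℝ) : ℝ :=
  ∑ u, G.wU u * ∑ α, g (u, α) * g' (u, α)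

/-- An assignment for Bob. -/
def IsBob (f : G.Q2 × G.A → ℝ) : Prop := (∀ p, 0 ≤ f p) ∧ ∀ v, ∑ β, f (v, β) = 1

/-- An assignment for Alice. -/
def IsAlice (g : G.Q1 × G.A → ℝ) : Prop := (∀ p, 0 ≤ g p) ∧ ∀ u, ∑ α, g (u, α) = 1

/-- The value of the game: `val(G) = max ⟨g, Gf⟩` over assignments. -/
noncomputable def val : ℝ :=
  sSup { x | ∃ f g, G.IsBob f ∧ G.IsAlice g ∧ x = G.inn g (G.op f) }

/-- The collision value `‖G‖ = max_f ‖Gf‖` over assignments `f` for Bob. -/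
noncomputable def collVal : ℝ :=
  sSup { x | ∃ f, G.IsBob f ∧ x = Real.sqrt (G.normUsq (G.op f)) }

/-- Product of projection constraints. -/
def tensorC {A A' : Type} (π : A → Option A) (π' : A' → Option A') :
    A × A' → Option (A × A') :=
  fun b => (π b.1).bind fun a => (π' b.2).map fun a' => (a, a')

/-- The product (parallel repetition) of two projection games. -/
noncomputable def tensor (G H : ProjGame) : ProjGame where
  Q1 := G.Q1 × H.Q1
  Q2 := G.Q2 × H.Q2
  A := G.A × H.A
  μ := fun x =>
    ∑ y : (G.Q1 × G.Q2 × (G.A → Option G.A)) × (H.Q1 × H.Q2 × (H.A → Option H.A)),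
      if ((y.1.1, y.2.1), (y.1.2.1, y.2.2.1), tensorC y.1.2.2 y.2.2.2) = x
      then G.μ y.1 * H.μ y.2 else 0
  μ_nonneg := by
    intro x
    refine Finset.sum_nonneg fun y _ => ?_
    split
    · exact mul_nonneg (G.μ_nonneg _) (H.μ_nonneg _)
    · exact le_refl 0
  μ_sum := by
    rw [Finset.sum_comm]
    simp only [Finset.sum_ite_eq, Finset.mem_univ, if_true]
    rw [Fintype.sum_prod_type]
    calc (∑ y1, ∑ y2, G.μ y1 * H.μ y2)
        = (∑ y1, G.μ y1) * (∑ y2, H.μ y2) := by rw [Finset.sum_mul_sum]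
      _ = 1 := by rw [G.μ_sum, H.μ_sum, mul_one]

/-- `G.iterTensor k` is the `(k+1)`-fold parallel repetition `G^{⊗(k+1)}`. -/
noncomputable def iterTensor (G : ProjGame) : ℕ → ProjGame
  | 0 => G
  | n + 1 => G.tensor (G.iterTensor n)

/-- `val₊(G)`: supremum of values of vector assignments. -/
noncomputable def valPlus (G : ProjGame) : ℝ :=
  sSup { x | ∃ n : ℕ, 0 < n ∧ ∃ f : G.Q2 × G.A → Fin n → ℝ,
    (∀ p i, 0 ≤ f p i) ∧
    (∀ v, Real.sqrt (∑ i, (∑ β, f (v, β) i) ^ 2) ≤ 1) ∧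
    x = Real.sqrt (∑ u, G.wU u * ∑ α, ∑ i, (G.op (fun q => f q i) (u, α)) ^ 2) }

/-- `‖Th‖² = E_v [(∑_β h(v,β))²]`. -/
noncomputable def Tnormsq (G : ProjGame) (h : G.Q2 × G.A → ℝ) : ℝ :=
  ∑ v, G.wV v * (∑ β, h (v, β)) ^ 2

/-- `λ₊(G)`: supremum of `‖Gh‖/‖Th‖` over nonnegative `h` with `‖Th‖ > 0`. -/
noncomputable def lambdaPlus (G : ProjGame) : ℝ :=
  sSup { x | ∃ h : G.Q2 × G.A → ℝ, (∀ p, 0 ≤ h p) ∧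
    0 < Real.sqrt (G.Tnormsq h) ∧
    x = Real.sqrt (G.normUsq (G.op h)) / Real.sqrt (G.Tnormsq h) }

/-- The symmetrized distribution on `V × V` (with the constraints marginalized out). -/
noncomputable def msym (G : ProjGame) (v v' : G.Q2) : ℝ :=
  ∑ u, ((∑ π, G.μ (u, v, π)) * (∑ π', G.μ (u, v', π'))) / G.wU u

/-- `G` is `γ`-expanding: the Markov operator of the symmetrized constraint graph has
spectral gap at least `γ`, i.e. `|⟨x, Ax⟩| ≤ (1-γ) E_v[x(v)²]` for mean-zero `x`. -/
def IsExpanding (G : ProjGame) (γ : ℝ) : Prop :=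
  ∀ x : G.Q2 → ℝ, (∑ v, G.wV v * x v) = 0 →
    |∑ v, ∑ v', G.msym v v' * x v * x v'| ≤ (1 - γ) * ∑ v, G.wV v * (x v) ^ 2

/-- The symmetrized distribution on `(v, v', π, π')`. -/
noncomputable def msymFull (G : ProjGame) (v v' : G.Q2) (π π' : G.A → Option G.A) : ℝ :=
  ∑ u, (G.μ (u, v, π) * G.μ (u, v', π')) / G.wU u

/-- The value of the assignment `x` in the symmetrized game `G_sym`. -/
noncomputable def symValAssign (G : ProjGame) (x : G.Q2 → G.A) : ℝ :=
  ∑ v, ∑ v', ∑ π, ∑ π', G.msymFull v v' π π' *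
    (if ∃ α, π (x v) = some α ∧ π' (x v') = some α then 1 else 0)

/-- The value of the symmetrized game `G_sym`. -/
noncomputable def symVal (G : ProjGame) : ℝ :=
  sSup { r | ∃ x : G.Q2 → G.A, r = G.symValAssign x }

end ProjGame

namespace ProjGame

lemma tensor_sum (G H : ProjGame) (u : G.Q1) (u' : H.Q1)
    (F : G.Q2 × H.Q2 → (G.A × H.A → Option (G.A × H.A)) → ℝ) :
    (∑ V : G.Q2 × H.Q2, ∑ π : G.A × H.A → Option (G.A × H.A),
      (G.tensor H).μ ((u, u'), V, π) * F V π) =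
    ∑ v, ∑ π, ∑ v', ∑ π', G.μ (u, v, π) * H.μ (u', v', π') * F (v, v') (tensorC π π') := by
  have e1 : (∑ V : G.Q2 × H.Q2, ∑ π : G.A × H.A → Option (G.A × H.A),
      (G.tensor H).μ ((u, u'), V, π) * F V π) =
      ∑ y : (G.Q1 × G.Q2 × (G.A → Option G.A)) × (H.Q1 × H.Q2 × (H.A → Option H.A)),
        ∑ V : G.Q2 × H.Q2, ∑ π : G.A × H.A → Option (G.A × H.A),
        if ((y.1.1, y.2.1), (y.1.2.1, y.2.2.1), tensorC y.1.2.2 y.2.2.2) = ((u, u'), V, π)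
        then G.μ y.1 * H.μ y.2 * F V π else 0 := by
    symm
    rw [Finset.sum_comm]
    refine Finset.sum_congr rfl fun V _ => ?_
    rw [Finset.sum_comm]
    refine Finset.sum_congr rfl fun π _ => ?_
    symm
    simp only [tensor]
    rw [Finset.sum_mul]
    refine Finset.sum_congr rfl fun y _ => ?_
    rw [ite_mul, zero_mul]
  have e2 : ∀ y : (G.Q1 × G.Q2 × (G.A → Option G.A)) × (H.Q1 × H.Q2 × (H.A → Option H.A)),
      (∑ V : G.Q2 × H.Q2, ∑ π : G.A × H.A → Option (G.A × H.A),
        if ((y.1.1, y.2.1), (y.1.2.1, y.2.2.1), tensorC y.1.2.2 y.2.2.2) = ((u, u'), V, π)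
        then G.μ y.1 * H.μ y.2 * F V π else 0) =
      if y.1.1 = u then (if y.2.1 = u' then
        G.μ y.1 * H.μ y.2 * F (y.1.2.1, y.2.2.1) (tensorC y.1.2.2 y.2.2.2) else 0) else 0 := by
    intro y
    rw [Finset.sum_eq_single (y.1.2.1, y.2.2.1)]
    · rw [Finset.sum_eq_single (tensorC y.1.2.2 y.2.2.2)]
      · by_cases h1 : y.1.1 = u <;> by_cases h2 : y.2.1 = u' <;> simp [h1, h2]
      · intro π _ hπ
        rw [if_neg]
        intro h
        simp only [Prod.mk.injEq] at h
        exact hπ h.2.2.symm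
      · simp
    · intro V _ hV
      refine Finset.sum_eq_zero fun π _ => ?_
      rw [if_neg]
      intro h
      exact hV (congrArg (fun t => t.2.1) h).symm
    · simp
  rw [e1, Finset.sum_congr rfl fun y _ => e2 y]
  rw [Fintype.sum_prod_type, Fintype.sum_prod_type]
  rw [Finset.sum_eq_single u]
  · rw [Fintype.sum_prod_type]
    refine Finset.sum_congr rfl fun v _ => Finset.sum_congr rfl fun π _ => ?_
    rw [Fintype.sum_prod_type, Finset.sum_eq_single u']
    · rw [Fintype.sum_prod_type]
      simp
    · intro b _ hb
      simp [hb]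
    · simp
  · intro b _ hb
    simp [hb]
  · simp

lemma tensor_wU (G H : ProjGame) (u : G.Q1) (u' : H.Q1) :
    (G.tensor H).wU ((u, u') : G.Q1 × H.Q1) = G.wU u * H.wU u' := by
  have h := tensor_sum G H u u' (fun _ _ => 1)
  simp only [mul_one] at h
  refine Eq.trans h ?_
  simp only [wU, Finset.sum_mul]
  simp only [Finset.mul_sum]

lemma tensorC_eq_some {A A' : Type} (π : A → Option A) (π' : A' → Option A') (b : A × A')
    (a : A) (a' : A') : tensorC π π' b = some (a, a') ↔ π b.1 = some a ∧ π' b.2 = some a' := by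
  unfold tensorC
  cases π b.1 <;> cases π' b.2 <;> simp

/-- partial application of `H` -/
noncomputable def part (G H : ProjGame) (f : (G.Q2 × H.Q2) × (G.A × H.A) → ℝ)
    (u' : H.Q1) (α' : H.A) : G.Q2 × G.A → ℝ :=
  fun p => H.op (fun q => f ((p.1, q.1), (p.2, q.2))) (u', α')

lemma tensor_op (G H : ProjGame) (f : (G.Q2 × H.Q2) × (G.A × H.A) → ℝ)
    (u : G.Q1) (u' : H.Q1) (α : G.A) (α' : H.A) :
    (G.tensor H).op f (((u, u'), (α, α')) : (G.Q1 × H.Q1) × (G.A × H.A)) =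
      G.op (part G H f u' α') (u, α) := by
  have h := tensor_sum G H u u' (fun V π => ∑ β : G.A × H.A,
    if π β = some (α, α') then f (V, β) else 0)
  have h2 : (G.tensor H).op f (((u, u'), (α, α')) : (G.Q1 × H.Q1) × (G.A × H.A)) =
    (∑ V : G.Q2 × H.Q2, ∑ π : G.A × H.A → Option (G.A × H.A),
      (G.tensor H).μ ((u, u'), V, π) * ∑ β : G.A × H.A,
        if π β = some (α, α') then f (V, β) else 0) /
      (G.tensor H).wU ((u, u') : G.Q1 × H.Q1) := by
    rfl
  rw [h2, h, tensor_wU]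
  simp only [op, part]
  rw [mul_comm (G.wU u), ← div_div]
  congr 1
  rw [Finset.sum_div]
  refine Finset.sum_congr rfl fun v _ => ?_
  rw [Finset.sum_div]
  refine Finset.sum_congr rfl fun π _ => ?_
  simp only [tensorC_eq_some]
  have e : ∀ β : G.A, (if π β = some α then
      (∑ v', ∑ π', H.μ (u', v', π') * ∑ β', if π' β' = some α' then f ((v, v'), (β, β')) else 0)
        / H.wU u' else 0) =
      (∑ v', ∑ π', H.μ (u', v', π') * ∑ β', if π β = some α ∧ π' β' = some α' then
        f ((v, v'), (β, β')) else 0) / H.wU u' := by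
    intro β
    by_cases hb : π β = some α <;> simp [hb]
  rw [Finset.sum_congr rfl fun β _ => e β, ← Finset.sum_div, mul_div_assoc']
  congr 1
  symm
  rw [Finset.sum_comm, Finset.mul_sum]
  refine Finset.sum_congr rfl fun v' _ => ?_
  rw [Finset.sum_comm, Finset.mul_sum]
  refine Finset.sum_congr rfl fun π' _ => ?_
  symm
  rw [← Finset.mul_sum, Fintype.sum_prod_type, mul_assoc]

lemma wU_nonneg (G : ProjGame) (u : G.Q1) : 0 ≤ G.wU u :=
  Finset.sum_nonneg fun _ _ => Finset.sum_nonneg fun _ _ => G.μ_nonneg _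

lemma wV_nonneg (G : ProjGame) (v : G.Q2) : 0 ≤ G.wV v :=
  Finset.sum_nonneg fun _ _ => Finset.sum_nonneg fun _ _ => G.μ_nonneg _

lemma wV_sum (G : ProjGame) : ∑ v, G.wV v = 1 := by
  rw [← G.μ_sum, Fintype.sum_prod_type]
  simp only [wV, Fintype.sum_prod_type]
  rw [Finset.sum_comm]

lemma op_nonneg (G : ProjGame) (h : G.Q2 × G.A → ℝ) (hh : ∀ p, 0 ≤ h p) (p) :
    0 ≤ G.op h p := by
  refine div_nonneg (Finset.sum_nonneg fun _ _ => Finset.sum_nonneg fun _ _ =>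
    mul_nonneg (G.μ_nonneg _) (Finset.sum_nonneg fun _ _ => ?_)) (G.wU_nonneg _)
  split
  · exact hh _
  · exact le_rfl

lemma normUsq_nonneg (G : ProjGame) (g) : 0 ≤ G.normUsq g :=
  Finset.sum_nonneg fun _ _ => mul_nonneg (G.wU_nonneg _)
    (Finset.sum_nonneg fun _ _ => sq_nonneg _)

lemma Tnormsq_nonneg (G : ProjGame) (g) : 0 ≤ G.Tnormsq g :=
  Finset.sum_nonneg fun _ _ => mul_nonneg (G.wV_nonneg _) (sq_nonneg _)

lemma normUsq_op_le (G : ProjGame) (h : G.Q2 × G.A → ℝ) (hh : ∀ p, 0 ≤ h p) :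
    G.normUsq (G.op h) ≤ G.Tnormsq h := by
  have key : ∀ u, G.wU u * ∑ α, (G.op h (u, α)) ^ 2 ≤
      ∑ v, ∑ π, G.μ (u, v, π) * (∑ β, h (v, β)) ^ 2 := by
    intro u
    have hR : 0 ≤ ∑ v, ∑ π, G.μ (u, v, π) * (∑ β, h (v, β)) ^ 2 :=
      Finset.sum_nonneg fun _ _ => Finset.sum_nonneg fun _ _ =>
        mul_nonneg (G.μ_nonneg _) (sq_nonneg _)
    rcases (G.wU_nonneg u).eq_or_lt with h0 | hpos
    · rw [← h0, zero_mul]; exact hR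
    set S := ∑ v, ∑ π, G.μ (u, v, π) * ∑ β, h (v, β) with hS
    have s0 : ∑ α, (G.op h (u, α)) ≤ S / G.wU u := by
      simp only [op]
      rw [← Finset.sum_div]
      refine div_le_div_of_nonneg_right ?_ hpos.le
      rw [Finset.sum_comm]
      refine Finset.sum_le_sum fun v _ => ?_
      rw [Finset.sum_comm]
      refine Finset.sum_le_sum fun π _ => ?_
      rw [← Finset.mul_sum]
      refine mul_le_mul_of_nonneg_left ?_ (G.μ_nonneg _)
      rw [Finset.sum_comm]
      refine Finset.sum_le_sum fun β _ => ?_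
      cases hb : π β with
      | none => simpa using hh _
      | some a => simp
    have s1 : ∑ α, (G.op h (u, α)) ^ 2 ≤ (S / G.wU u) ^ 2 := by
      refine le_trans (Finset.sum_sq_le_sq_sum_of_nonneg fun α _ => G.op_nonneg h hh _) ?_
      exact pow_le_pow_left₀ (Finset.sum_nonneg fun α _ => G.op_nonneg h hh _) s0 2
    have s2 : S ^ 2 ≤ G.wU u * ∑ v, ∑ π, G.μ (u, v, π) * (∑ β, h (v, β)) ^ 2 := by
      have := Finset.sum_sq_le_sum_mul_sum_of_sq_le_mul
        (Finset.univ : Finset (G.Q2 × (G.A → Option G.A)))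
        (r := fun x => G.μ (u, x.1, x.2) * ∑ β, h (x.1, β))
        (f := fun x => G.μ (u, x.1, x.2))
        (g := fun x => G.μ (u, x.1, x.2) * (∑ β, h (x.1, β)) ^ 2)
        (fun x _ => G.μ_nonneg _) (fun x _ => mul_nonneg (G.μ_nonneg _) (sq_nonneg _))
        (fun x _ => le_of_eq (by ring))
      simp only [Fintype.sum_prod_type] at this
      exact this
    calc G.wU u * ∑ α, (G.op h (u, α)) ^ 2 ≤ G.wU u * (S / G.wU u) ^ 2 :=
          mul_le_mul_of_nonneg_left s1 hpos.le
      _ = S ^ 2 / G.wU u := by field_simp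
      _ ≤ _ := by rw [div_le_iff₀ hpos, mul_comm]; exact s2
  refine le_trans (Finset.sum_le_sum fun u _ => key u) ?_
  simp only [Tnormsq, wV, Finset.sum_mul]
  rw [Finset.sum_comm]

lemma Tnormsq_bob (G : ProjGame) (f) (hf : G.IsBob f) : G.Tnormsq f = 1 := by
  simp [Tnormsq, hf.2, wV_sum]

lemma coll_le (G : ProjGame) (f) (hf : G.IsBob f) :
    G.normUsq (G.op f) ≤ G.collVal ^ 2 := by
  have hb : BddAbove { x | ∃ f, G.IsBob f ∧ x = Real.sqrt (G.normUsq (G.op f)) } := by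
    refine ⟨1, ?_⟩
    rintro x ⟨f, hf, rfl⟩
    rw [Real.sqrt_le_one]
    exact (G.normUsq_op_le f hf.1).trans (G.Tnormsq_bob f hf).le
  have := le_csSup hb ⟨f, hf, rfl⟩
  exact (Real.sqrt_le_left ((Real.sqrt_nonneg _).trans this)).1 this

lemma collVal_nonneg (G : ProjGame) : 0 ≤ G.collVal := by
  refine Real.sSup_nonneg ?_
  rintro x ⟨f, _, rfl⟩
  exact Real.sqrt_nonneg _

lemma lambdaPlus_nonneg (G : ProjGame) : 0 ≤ G.lambdaPlus := by
  refine Real.sSup_nonneg ?_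
  rintro x ⟨f, _, _, rfl⟩
  positivity

lemma lambda_le (G : ProjGame) (h : G.Q2 × G.A → ℝ) (hh : ∀ p, 0 ≤ h p) :
    G.normUsq (G.op h) ≤ G.lambdaPlus ^ 2 * G.Tnormsq h := by
  rcases (G.Tnormsq_nonneg h).eq_or_lt with h0 | hpos
  · have := G.normUsq_op_le h hh
    rw [← h0] at this ⊢
    simpa using this
  have hb : BddAbove { x | ∃ h : G.Q2 × G.A → ℝ, (∀ p, 0 ≤ h p) ∧
    0 < Real.sqrt (G.Tnormsq h) ∧
    x = Real.sqrt (G.normUsq (G.op h)) / Real.sqrt (G.Tnormsq h) } := by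
    refine ⟨1, ?_⟩
    rintro x ⟨h, hh, h1, rfl⟩
    rw [div_le_one h1]
    exact Real.sqrt_le_sqrt (G.normUsq_op_le h hh)
  have h2 : Real.sqrt (G.normUsq (G.op h)) / Real.sqrt (G.Tnormsq h) ≤ G.lambdaPlus :=
    le_csSup hb ⟨h, hh, Real.sqrt_pos.2 hpos, rfl⟩
  rw [div_le_iff₀ (Real.sqrt_pos.2 hpos)] at h2
  have h3 := pow_le_pow_left₀ (Real.sqrt_nonneg _) h2 2
  rwa [mul_pow, Real.sq_sqrt (G.normUsq_nonneg _), Real.sq_sqrt hpos.le] at h3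

lemma sum_part (G H : ProjGame) (f : (G.Q2 × H.Q2) × (G.A × H.A) → ℝ)
    (u' : H.Q1) (α' : H.A) (v : G.Q2) :
    ∑ β, part G H f u' α' (v, β) =
      H.op (fun q => ∑ β, f ((v, q.1), (β, q.2))) (u', α') := by
  simp only [part, op]
  rw [← Finset.sum_div]
  congr 1
  rw [Finset.sum_comm]
  refine Finset.sum_congr rfl fun v' _ => ?_
  rw [Finset.sum_comm]
  refine Finset.sum_congr rfl fun π' _ => ?_
  rw [← Finset.mul_sum, Finset.sum_comm]
  congr 1
  refine Finset.sum_congr rfl fun β' _ => ?_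
  split <;> simp

lemma tensor_norm (G H : ProjGame) (f : (G.Q2 × H.Q2) × (G.A × H.A) → ℝ) :
    (G.tensor H).normUsq ((G.tensor H).op f) =
      ∑ u', ∑ α', H.wU u' * G.normUsq (G.op (part G H f u' α')) := by
  have e : (G.tensor H).normUsq ((G.tensor H).op f) =
      ∑ U : G.Q1 × H.Q1, (G.tensor H).wU U * ∑ a : G.A × H.A,
        ((G.tensor H).op f ((U, a) : (G.Q1 × H.Q1) × (G.A × H.A))) ^ 2 := rfl
  rw [e, Fintype.sum_prod_type_right]
  refine Finset.sum_congr rfl fun u' _ => ?_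
  simp only [Fintype.sum_prod_type_right, tensor_wU, tensor_op, normUsq, Finset.mul_sum]
  rw [Finset.sum_comm]
  refine Finset.sum_congr rfl fun α' _ => Finset.sum_congr rfl fun u _ =>
    Finset.sum_congr rfl fun α _ => by ring

lemma tensor_bob_le (G H : ProjGame) (f : (G.Q2 × H.Q2) × (G.A × H.A) → ℝ)
    (h0 : ∀ p, 0 ≤ f p) (h1 : ∀ V, ∑ b, f (V, b) = 1) :
    (G.tensor H).normUsq ((G.tensor H).op f) ≤ G.lambdaPlus ^ 2 * H.collVal ^ 2 := by
  rw [tensor_norm]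
  calc ∑ u', ∑ α', H.wU u' * G.normUsq (G.op (part G H f u' α'))
      ≤ ∑ u', ∑ α', H.wU u' * (G.lambdaPlus ^ 2 * G.Tnormsq (part G H f u' α')) := by
        refine Finset.sum_le_sum fun u' _ => Finset.sum_le_sum fun α' _ =>
          mul_le_mul_of_nonneg_left (G.lambda_le _ fun p => ?_) (H.wU_nonneg _)
        exact H.op_nonneg _ (fun _ => h0 _) _
    _ = G.lambdaPlus ^ 2 * ∑ v, G.wV v *
          H.normUsq (H.op (fun q => ∑ β, f ((v, q.1), (β, q.2)))) := by
        simp only [Tnormsq, sum_part, normUsq, Finset.mul_sum]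
        refine (Finset.sum_congr rfl fun u' _ => Finset.sum_comm).trans (Finset.sum_comm.trans ?_)
        refine Finset.sum_congr rfl fun v _ => Finset.sum_congr rfl fun u' _ =>
          Finset.sum_congr rfl fun α' _ => by ring
    _ ≤ G.lambdaPlus ^ 2 * ∑ v, G.wV v * H.collVal ^ 2 := by
        refine mul_le_mul_of_nonneg_left (Finset.sum_le_sum fun v _ =>
          mul_le_mul_of_nonneg_left (H.coll_le _ ⟨fun _ => Finset.sum_nonneg fun _ _ => h0 _,
            fun v' => ?_⟩) (G.wV_nonneg _)) (sq_nonneg _)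
        rw [← h1 (v, v'), Fintype.sum_prod_type_right]
    _ = _ := by rw [← Finset.sum_mul, wV_sum, one_mul]

end ProjGame

/-- Any two projection games satisfy `‖G ⊗ H‖ ≤ λ₊(G) · ‖H‖`. -/
theorem collVal_tensor_le_lambdaPlus (G H : ProjGame) :
    (G.tensor H).collVal ≤ G.lambdaPlus * H.collVal := by
  have hn := mul_nonneg G.lambdaPlus_nonneg H.collVal_nonneg
  refine Real.sSup_le ?_ hn
  rintro x ⟨f, hf, rfl⟩
  rw [Real.sqrt_le_left hn, mul_pow]
  exact ProjGame.tensor_bob_le G H f hf.1 hf.2
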